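/- arXiv:1809.07699 — 2 statements merged into one kernel-verified Lean document; each statement's English description precedes it below -/
import Mathlib

section
/- Let p be a prime and let G be a nonabelian group of order p^3. Then cod(G) = {1, p, p^2}. -/
open CategoryTheory

/-- The degree of a complex representation: the dimension of the underlying vector space. -/
noncomputable def repDegree {G : Type} [Group G] (V : FDRep ℂ G) : ℕ :=
  Module.finrank ℂ V

/-- The kernel of a representation of `G`, as a subgroup of `G`. -/
noncomputable def repKer {G : Type} [Group G] (V : FDRep ℂ G) : Subgroup G :=
  MonoidHom.ker (Representation.asGroupHom V.ρ)

/-- The codegree of a character: `|G : ker χ| / χ(1)`. -/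
noncomputable def codegree {G : Type} [Group G] (V : FDRep ℂ G) : ℕ :=
  (repKer V).index / repDegree V

/-- `cod(G)`: the set of codegrees of the irreducible complex characters of `G`. -/
def codSet (G : Type) [Group G] : Set ℕ :=
  {m | ∃ V : FDRep ℂ G, Simple V ∧ codegree V = m}

/-- `cd(G)`: the set of degrees of the irreducible complex characters of `G`. -/
def cdSet (G : Type) [Group G] : Set ℕ :=
  {m | ∃ V : FDRep ℂ G, Simple V ∧ repDegree V = m}

/-- The nilpotency class of `G`: the least `n` with `upperCentralSeries G n = ⊤`. -/
noncomputable def nilClass (G : Type) [Group G] : ℕ :=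
  sInf {n | upperCentralSeries G n = ⊤}

open scoped Classical in
/-- The character of `G` induced from the linear character `lam` of the subgroup `H`. -/
noncomputable def indLinearChar {G : Type} [Group G] [Fintype G] (H : Subgroup G)
    (lam : H →* ℂˣ) : G → ℂ :=
  fun g => (∑ x : G, if h : x * g * x⁻¹ ∈ H then ((lam ⟨x * g * x⁻¹, h⟩ : ℂˣ) : ℂ) else 0) /
    (Nat.card H : ℂ)

/-- A finite group is normally monomial if every irreducible complex character is induced
from a linear character of a normal subgroup. -/
def NormallyMonomial (G : Type) [Group G] [Fintype G] : Prop :=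
  ∀ V : FDRep ℂ G, Simple V → ∃ (H : Subgroup G) (lam : H →* ℂˣ),
    H.Normal ∧ FDRep.character V = indLinearChar H lam

/-!
Let `χ` be an irreducible character with center `Z(χ)`, the elements acting by scalars, and suppose
that `Z(χ)` contains all commutators. If `g ∉ Z(χ)`, some commutator `⁅h, g⁆` acts as a scalar
`c ≠ 1`, so `χ(g) = χ(h g h⁻¹) = c χ(g)` forces `χ(g) = 0`; on `Z(χ)` one has `|χ|² = χ(1)²`. Hence
`⟨χ, χ⟩ = 1` reads `χ(1)² = |G : Z(χ)|`.

In order `p³` every nontrivial normal subgroup has index dividing `p²`, hence contains all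
commutators. An unfaithful irreducible `χ` is therefore linear and its codegree is the index of its
kernel, a divisor of `p²`. A faithful one has `Z(χ) = Z(G)`, of index `p²`, hence degree `p` and
codegree `p³ / p`. For the converse, `1` and `p` come from linear characters, and `p²` from an
irreducible representation that is nontrivial on some commutator: it is faithful, since otherwise
its kernel would contain all commutators.
-/

universe u

open scoped MonoidAlgebra commutatorElement

section Group

variable {G : Type*} [Group G] {p n : ℕ}

theorem index_dvd_prime_pow_of_ne_bot (hp : p.Prime) (hG : Nat.card G = p ^ (n + 1))
    {N : Subgroup G} (hN : N ≠ ⊥) : N.index ∣ p ^ n := by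
  by_contra hdvd
  have hindex : N.index = p ^ (n + 1) :=
    Nat.eq_prime_pow_of_dvd_least_prime_pow hp hdvd (hG ▸ N.index_dvd_card)
  have hmul := N.card_mul_index
  rw [hindex, hG, Nat.mul_eq_right (pow_ne_zero _ hp.ne_zero)] at hmul
  exact hN (N.card_eq_one.mp hmul)

theorem commutator_le_of_index_dvd_prime_sq (hp : p.Prime) {N : Subgroup G} [N.Normal]
    (hN : N.index ∣ p ^ 2) : commutator G ≤ N := by
  have : Fact p.Prime := ⟨hp⟩
  rw [← Subgroup.Normal.quotient_commutative_iff_commutator_le]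
  by_cases hdvd : N.index ∣ p
  · have : IsCyclic (G ⧸ N) := isCyclic_of_card_dvd_prime hdvd
    infer_instance
  · exact IsPGroup.isMulCommutative_of_card_eq_prime_sq (p := p)
      (Nat.eq_prime_pow_of_dvd_least_prime_pow (k := 1) hp (by rwa [pow_one]) hN)

theorem exists_normal_index_eq_prime (hp : p.Prime) (hG : Nat.card G = p ^ (n + 1)) :
    ∃ N : Subgroup G, N.Normal ∧ N.index = p := by
  have : Fact p.Prime := ⟨hp⟩
  have : Finite G := Nat.finite_of_card_ne_zero (hG ▸ pow_ne_zero _ hp.ne_zero)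
  obtain ⟨N, hN⟩ := Sylow.exists_subgroup_card_pow_prime p (hG ▸ pow_dvd_pow p n.le_succ)
  have hindex : N.index = p := by
    have hmul := N.card_mul_index
    rw [hN, hG, pow_succ] at hmul
    exact Nat.eq_of_mul_eq_mul_left (pow_pos hp.pos n) hmul
  refine ⟨N, Subgroup.normal_of_index_eq_minFac_card ?_, hindex⟩
  rw [hindex, hG, hp.pow_minFac n.succ_ne_zero]

theorem center_ne_bot_of_card_eq_prime_pow (hp : p.Prime) (hG : Nat.card G = p ^ (n + 1)) :
    Subgroup.center G ≠ ⊥ := by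
  have : Fact p.Prime := ⟨hp⟩
  have : Finite G := Nat.finite_of_card_ne_zero (hG ▸ pow_ne_zero _ hp.ne_zero)
  have : Nontrivial G :=
    Finite.one_lt_card_iff_nontrivial.mp (hG ▸ one_lt_pow₀ hp.one_lt n.succ_ne_zero)
  exact (IsPGroup.of_card hG).bot_lt_center.ne'

theorem exists_monoidHom_ker_eq (N : Subgroup G) [N.Normal] [N.FiniteIndex] [IsCyclic (G ⧸ N)] :
    ∃ f : G →* ℂˣ, f.ker = N := by
  have : NeZero N.index := ⟨Subgroup.FiniteIndex.index_ne_zero⟩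
  let e : G ⧸ N ≃* rootsOfUnity N.index ℂ :=
    mulEquivOfCyclicCardEq (Complex.card_rootsOfUnity N.index).symm
  refine ⟨(rootsOfUnity N.index ℂ).subtype.comp (e.toMonoidHom.comp (QuotientGroup.mk' N)), ?_⟩
  ext g
  simp [MonoidHom.mem_ker]

section OrderPrimeCube

variable (hp : p.Prime) (hG : Nat.card G = p ^ 3)
include hp hG

theorem commutator_le_of_ne_bot {N : Subgroup G} [N.Normal] (hN : N ≠ ⊥) : commutator G ≤ N :=
  commutator_le_of_index_dvd_prime_sq hp (index_dvd_prime_pow_of_ne_bot hp hG hN)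

theorem index_center_eq_prime_sq (hna : ¬ IsMulCommutative G) :
    (Subgroup.center G).index = p ^ 2 := by
  have : Fact p.Prime := ⟨hp⟩
  refine Nat.eq_prime_pow_of_dvd_least_prime_pow (k := 1) hp (fun hdvd ↦ hna ?_)
    (index_dvd_prime_pow_of_ne_bot hp hG (center_ne_bot_of_card_eq_prime_pow hp hG))
  have : IsCyclic (G ⧸ Subgroup.center G) := isCyclic_of_card_dvd_prime (pow_one p ▸ hdvd)
  exact isMulCommutative_of_isCyclic_quotient_center_self G

end OrderPrimeCube

end Group

section Simple

variable {k G V : Type u} [Field k] [Group G] [AddCommGroup V] [Module k V] [Module.Finite k V]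

theorem simple_of_isSimpleModule_asModule (ρ : Representation k G V)
    (hρ : IsSimpleModule k[G] ρ.asModule) : Simple (FDRep.of ρ) := by
  let F : FDRep k G ⥤ ModuleCat k[G] := forget₂ (FDRep k G) (Rep k G) ⋙ Rep.toModuleMonoidAlgebra
  have : Simple (F.obj (FDRep.of ρ)) := simple_iff_isSimpleModule.mpr hρ
  exact F.simple_of_simple_obj (FDRep.of ρ)

theorem simple_fdRep_of_finrank_eq_one (ρ : Representation k G V) (hV : Module.finrank k V = 1) :
    Simple (FDRep.of ρ) :=
  simple_of_isSimpleModule_asModule ρ <| (isSimpleModule_iff ..).mpr <|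
    is_simple_module_of_finrank_eq_one (K := k) (V := ρ.asModule) hV

variable (V) in
theorem simple_ofModule' [Module k[G] V] [IsScalarTower k k[G] V] [IsSimpleModule k[G] V] :
    Simple (FDRep.of (Representation.ofModule' (k := k) (G := G) V)) := by
  let ρ := Representation.ofModule' (k := k) (G := G) V
  have hρ : ρ.asAlgebraHom = Algebra.lsmul k k V :=
    (MonoidAlgebra.lift k (Module.End k V) G).apply_symm_apply _
  let e : ρ.asModule ≃ₗ[k[G]] V :=
    { ρ.asModuleEquiv.toAddEquiv with
      map_smul' := fun r x ↦ (ρ.asModuleEquiv_map_smul r x).trans congr($hρ r (ρ.asModuleEquiv x)) }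
  exact simple_of_isSimpleModule_asModule ρ (IsSimpleModule.congr e)

end Simple

theorem exists_isMaximal_notMem {R : Type*} [Ring R] [IsSemisimpleRing R] {x : R} (hx : x ≠ 0) :
    ∃ I : Ideal R, I.IsMaximal ∧ x ∉ I := by
  have hx' : x ∉ Ring.jacobson R := by simpa [IsSemisimpleRing.jacobson_eq_bot] using hx
  simpa [Ring.jacobson_eq_sInf_isMaximal, Submodule.mem_sInf] using hx'

theorem exists_simple_rho_ne_one {k G : Type u} [Field k] [Group G] [Finite G]
    [NeZero (Nat.card G : k)] {g : G} (hg : g ≠ 1) : ∃ V : FDRep k G, Simple V ∧ V.ρ g ≠ 1 := by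
  have hx : MonoidAlgebra.of k G g - 1 ≠ 0 := by
    rw [sub_ne_zero, ← map_one (MonoidAlgebra.of k G)]
    exact MonoidAlgebra.of_injective.ne hg
  obtain ⟨I, hI, hxI⟩ := exists_isMaximal_notMem hx
  have : IsSimpleModule k[G] (k[G] ⧸ I) := isSimpleModule_iff_isCoatom.mpr hI.out
  refine ⟨FDRep.of (Representation.ofModule' (k[G] ⧸ I)), simple_ofModule' _, fun h ↦ hxI ?_⟩
  have hfix : MonoidAlgebra.of k G g • Submodule.Quotient.mk (p := I) 1 = Submodule.Quotient.mk 1 :=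
    LinearMap.congr_fun h (Submodule.Quotient.mk 1)
  rwa [← Submodule.Quotient.mk_smul, smul_eq_mul, mul_one, Submodule.Quotient.eq] at hfix

section Character

variable {k G : Type u} [Field k] [Group G]

/-- The center `Z(χ)` of the character `χ` of `V`, encoded as the subgroup of those elements whose
action on `V` commutes with the action of all of `G`. For irreducible `V` over an algebraically
closed field these are the elements acting by scalars, by Schur's lemma. -/
noncomputable def repCenter (V : FDRep k G) : Subgroup G :=
  (Subgroup.centralizer (Set.range (Representation.asGroupHom V.ρ))).comap
    (Representation.asGroupHom V.ρ)

theorem mem_repCenter {V : FDRep k G} {g : G} :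
    g ∈ repCenter V ↔ ∀ h : G, V.ρ ⁅h, g⁆ = 1 := by
  rw [repCenter, Subgroup.mem_comap, Subgroup.mem_centralizer_iff_commutator_eq_one,
    Set.forall_mem_range]
  simp_rw [← map_commutatorElement, Units.ext_iff, Representation.asGroupHom_apply, Units.val_one]

theorem exists_rho_eq_smul_one [IsAlgClosed k] {V : FDRep k G} [Simple V] {g : G}
    (hg : g ∈ repCenter V) : ∃ c : k, V.ρ g = c • 1 := by
  have hcomm (h : G) : V.ρ g * V.ρ h = V.ρ h * V.ρ g := by
    rw [← map_mul, ← map_mul, ← one_mul (V.ρ (g * h)), ← mem_repCenter.mp hg h, ← map_mul]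
    simp [commutatorElement_def]
  let f : V ⟶ V := ⟨FGModuleCat.ofHom (V.ρ g), fun h ↦ by
    ext x
    exact LinearMap.congr_fun (hcomm h) x⟩
  obtain ⟨c, hc⟩ := endomorphism_simple_eq_smul_id k f
  exact ⟨c, congr(($hc).hom.hom.hom).symm⟩

theorem character_mul_character_inv_of_rho_eq_smul_one (V : FDRep k G) {g : G} {c : k}
    (hg : V.ρ g = c • 1) :
    V.character g * V.character g⁻¹ = (Module.finrank k V : k) ^ 2 := by
  have hinv : c • V.ρ g⁻¹ = 1 := by
    rw [← one_mul (V.ρ g⁻¹), ← smul_mul_assoc, ← hg, ← map_mul, mul_inv_cancel, map_one]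
  calc V.character g * V.character g⁻¹
      = Module.finrank k V * LinearMap.trace k V (c • V.ρ g⁻¹) := by
        simp only [FDRep.character, hg, map_smul, LinearMap.trace_one, smul_eq_mul]
        ring
    _ = (Module.finrank k V : k) ^ 2 := by rw [hinv, LinearMap.trace_one, sq]

theorem character_eq_zero_of_rho_commutator_eq_smul_one (V : FDRep k G) {g h : G} {c : k}
    (hc : c ≠ 1) (hgh : V.ρ ⁅h, g⁆ = c • 1) : V.character g = 0 := by
  have hfix : c * V.character g = V.character g :=
    calc c * V.character g = V.character (⁅h, g⁆ * g) := by
          simp only [FDRep.character, map_mul, hgh, smul_mul_assoc, one_mul, map_smul, smul_eq_mul]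
      _ = V.character g := by
          rw [commutatorElement_def, inv_mul_cancel_right, FDRep.char_conj]
  by_contra hne
  exact hc ((mul_eq_right₀ hne).mp hfix)

theorem character_eq_zero_of_notMem_repCenter [IsAlgClosed k] {V : FDRep k G} [Simple V]
    (hV : commutator G ≤ repCenter V) {g : G} (hg : g ∉ repCenter V) : V.character g = 0 := by
  obtain ⟨h, hgh⟩ : ∃ h : G, V.ρ ⁅h, g⁆ ≠ 1 := by simpa [mem_repCenter] using hg
  have hmem : ⁅h, g⁆ ∈ repCenter V :=
    hV (Subgroup.commutator_mem_commutator (Subgroup.mem_top h) (Subgroup.mem_top g))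
  obtain ⟨c, hc⟩ := exists_rho_eq_smul_one hmem
  refine character_eq_zero_of_rho_commutator_eq_smul_one V (fun hc1 ↦ hgh ?_) hc
  rw [hc, hc1, one_smul]

theorem finrank_sq_eq_index_repCenter [IsAlgClosed k] [CharZero k] [Finite G] {V : FDRep k G}
    [Simple V] (hV : commutator G ≤ repCenter V) :
    Module.finrank k V ^ 2 = (repCenter V).index := by
  classical
  have := Fintype.ofFinite G
  have hterm (g : G) : V.character g * V.character g⁻¹ =
      if g ∈ repCenter V then (Module.finrank k V : k) ^ 2 else 0 := by
    split_ifs with hg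
    · obtain ⟨c, hc⟩ := exists_rho_eq_smul_one hg
      exact character_mul_character_inv_of_rho_eq_smul_one V hc
    · rw [character_eq_zero_of_notMem_repCenter hV hg, zero_mul]
  have hnorm : Nat.card (repCenter V) * Module.finrank k V ^ 2 = Nat.card G := by
    have hsum := (FDRep.simple_iff_char_is_norm_one V).mp ‹_›
    simp_rw [hterm, ← Finset.sum_filter, Finset.sum_const, nsmul_eq_mul,
      ← Fintype.card_subtype, ← Nat.card_eq_fintype_card] at hsum
    exact_mod_cast hsum
  exact Nat.eq_of_mul_eq_mul_left Nat.card_pos (hnorm.trans (repCenter V).card_mul_index.symm)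

end Character

/-- The representation of `G` on the base field attached to a linear character `f`. -/
def linearRep {k G : Type*} [Field k] [Group G] (f : G →* kˣ) : Representation k G k :=
  (Algebra.lmul k k).toMonoidHom.comp ((Units.coeHom k).comp f)

section Codegree

variable {G : Type} [Group G]

theorem mem_repKer {V : FDRep ℂ G} {g : G} : g ∈ repKer V ↔ V.ρ g = 1 := by
  rw [repKer, MonoidHom.mem_ker, Units.ext_iff, Representation.asGroupHom_apply, Units.val_one]

instance (V : FDRep ℂ G) : (repKer V).Normal :=
  MonoidHom.normal_ker _

theorem repCenter_eq_top {V : FDRep ℂ G} (hV : commutator G ≤ repKer V) : repCenter V = ⊤ :=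
  eq_top_iff.mpr fun g _ ↦ mem_repCenter.mpr fun h ↦ mem_repKer.mp <|
    hV (Subgroup.commutator_mem_commutator (Subgroup.mem_top h) (Subgroup.mem_top g))

theorem repCenter_eq_center {V : FDRep ℂ G} (hV : repKer V = ⊥) :
    repCenter V = Subgroup.center G := by
  ext g
  simp_rw [mem_repCenter, ← mem_repKer, hV, Subgroup.mem_bot,
    commutatorElement_eq_one_iff_mul_comm, Subgroup.mem_center_iff]

theorem codegree_eq_index_repKer [Finite G] {V : FDRep ℂ G} [Simple V]
    (hV : commutator G ≤ repKer V) : codegree V = (repKer V).index := by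
  have hcenter := repCenter_eq_top hV
  have hdeg : repDegree V ^ 2 = 1 := by
    rw [repDegree, finrank_sq_eq_index_repCenter (hcenter ▸ le_top), hcenter, Subgroup.index_top]
  rw [codegree, (Nat.pow_eq_one.mp hdeg).resolve_right two_ne_zero, Nat.div_one]

theorem repDegree_sq_eq_index_center [Finite G] {V : FDRep ℂ G} [Simple V]
    (hG : commutator G ≤ Subgroup.center G) (hV : repKer V = ⊥) :
    repDegree V ^ 2 = (Subgroup.center G).index := by
  have hcenter := repCenter_eq_center hV
  rw [repDegree, finrank_sq_eq_index_repCenter (hcenter ▸ hG), hcenter]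

theorem index_ker_mem_codSet (f : G →* ℂˣ) : f.ker.index ∈ codSet G := by
  have hker : repKer (FDRep.of (linearRep f)) = f.ker := by
    ext g
    rw [mem_repKer, MonoidHom.mem_ker, ← Units.val_eq_one]
    exact (Algebra.lmul_injective (R := ℂ) (A := ℂ)).eq_iff' (map_one _)
  refine ⟨FDRep.of (linearRep f), simple_fdRep_of_finrank_eq_one _ (Module.finrank_self ℂ), ?_⟩
  rw [codegree, hker, repDegree, Module.finrank_self, Nat.div_one]

theorem index_mem_codSet (N : Subgroup G) [N.Normal] [N.FiniteIndex] [IsCyclic (G ⧸ N)] :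
    N.index ∈ codSet G := by
  obtain ⟨f, rfl⟩ := exists_monoidHom_ker_eq N
  exact index_ker_mem_codSet f

section OrderPrimeCube

variable {p : ℕ} (hp : p.Prime) (hG : Nat.card G = p ^ 3)
include hp hG

theorem codegree_dvd_prime_sq_of_repKer_ne_bot {V : FDRep ℂ G} [Simple V] (hV : repKer V ≠ ⊥) :
    codegree V ∣ p ^ 2 := by
  have : Finite G := Nat.finite_of_card_ne_zero (hG ▸ pow_ne_zero _ hp.ne_zero)
  rw [codegree_eq_index_repKer (commutator_le_of_ne_bot hp hG hV)]
  exact index_dvd_prime_pow_of_ne_bot hp hG hV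

theorem codegree_eq_prime_sq_of_repKer_eq_bot (hna : ¬ IsMulCommutative G) {V : FDRep ℂ G}
    [Simple V] (hV : repKer V = ⊥) : codegree V = p ^ 2 := by
  have : Finite G := Nat.finite_of_card_ne_zero (hG ▸ pow_ne_zero _ hp.ne_zero)
  have hcenter : commutator G ≤ Subgroup.center G :=
    commutator_le_of_ne_bot hp hG (center_ne_bot_of_card_eq_prime_pow hp hG)
  have hdeg : repDegree V = p := Nat.pow_left_injective two_ne_zero <|
    (repDegree_sq_eq_index_center hcenter hV).trans (index_center_eq_prime_sq hp hG hna)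
  rw [codegree, hV, Subgroup.index_bot, hG, hdeg, pow_succ, Nat.mul_div_cancel _ hp.pos]

theorem exists_simple_repKer_eq_bot (hna : ¬ IsMulCommutative G) :
    ∃ V : FDRep ℂ G, Simple V ∧ repKer V = ⊥ := by
  have : Finite G := Nat.finite_of_card_ne_zero (hG ▸ pow_ne_zero _ hp.ne_zero)
  obtain ⟨a, b, hab⟩ : ∃ a b : G, ⁅a, b⁆ ≠ 1 := by
    simpa only [isMulCommutative_iff, not_forall, ← commutatorElement_eq_one_iff_mul_comm]
      using hna
  obtain ⟨V, hV, hρ⟩ := exists_simple_rho_ne_one (k := ℂ) hab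
  refine ⟨V, hV, by_contra fun hker ↦ hρ (mem_repKer.mp ?_)⟩
  exact commutator_le_of_ne_bot hp hG hker
    (Subgroup.commutator_mem_commutator (Subgroup.mem_top a) (Subgroup.mem_top b))

end OrderPrimeCube

end Codegree

/-- A nonabelian group of order `p^3` has `cod(G) = {1, p, p^2}`. -/
theorem nonabelian_p_cubed_codegrees (p : ℕ) (hp : p.Prime) (G : Type) [Group G] [Fintype G]
    (hcard : Fintype.card G = p ^ 3) (hna : ¬ ∀ a b : G, a * b = b * a) :
    codSet G = {1, p, p ^ 2} := by
  have hG : Nat.card G = p ^ 3 := Nat.card_eq_fintype_card.trans hcard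
  have hna' : ¬ IsMulCommutative G := isMulCommutative_iff.not.mpr hna
  ext m
  simp only [Set.mem_insert_iff, Set.mem_singleton_iff]
  constructor
  · rintro ⟨V, _, rfl⟩
    by_cases hker : repKer V = ⊥
    · exact .inr (.inr (codegree_eq_prime_sq_of_repKer_eq_bot hp hG hna' hker))
    · obtain ⟨i, hi, hcod⟩ :=
        (Nat.dvd_prime_pow hp).mp (codegree_dvd_prime_sq_of_repKer_ne_bot hp hG hker)
      interval_cases i <;> simp [hcod]
  · rintro (rfl | rfl | rfl)
    · simpa only [MonoidHom.ker_one, Subgroup.index_top] using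
        index_ker_mem_codSet (1 : G →* ℂˣ)
    · obtain ⟨N, _, rfl⟩ := exists_normal_index_eq_prime hp hG
      have : Fact N.index.Prime := ⟨hp⟩
      have : IsCyclic (G ⧸ N) := isCyclic_of_prime_card (p := N.index) rfl
      exact index_mem_codSet N
    · obtain ⟨V, hV, hker⟩ := exists_simple_repKer_eq_bot hp hG hna'
      exact ⟨V, hV, codegree_eq_prime_sq_of_repKer_eq_bot hp hG hna' hker⟩
end

section
/- Let p be a prime and let G be a finite p-group of maximal class with |G| = p^n and cd(G) = {1, p, p^b} for some integer b ≥ 2. Then n ≥ 2b + 1, and every faithful irreducible complex character χ of G satisfies χ(1) = p^b and cod(χ) = p^{n-b}. -/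
open CategoryTheory

/-!
For an irreducible `χ` of degree `p ^ b`, the operators `ρ g` span `End V` by Burnside's theorem,
and up to scalars there are at most `|G : Z(G)|` of them; hence `p ^ (2 * b) ≤ |G : Z(G)|`, and
`|Z(G)| ≥ p` gives `2 * b + 1 ≤ n`.

A faithful `χ` of degree `1` forces `G` to be abelian. If a faithful `χ` has degree `p` and `G` is
nonabelian, take `x` in the second center but not in the center. Its conjugates are scalar multiples
of `x` in the representation, so each of the at least `p` cosets of `C(x)` contributes a different
eigenvalue of `x`. Hence `|G : C(x)| = p` and the eigenspaces are lines stable under the normal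
subgroup `C(x)`. The `G`-translates of such a line span `V`, so `C(x)` is abelian, and an abelian
subgroup of index `p` bounds all irreducible degrees by `p`. Either way `p ^ b ≤ χ(1)`, so a
faithful `χ` has degree `p ^ b`.
-/

open scoped commutatorElement

section SpanOverCosets

variable {R G M : Type*} [Ring R] [StrongRankCondition R] [Group G] [AddCommGroup M] [Module R M]

theorem finrank_span_range_le_index (H : Subgroup G) [H.FiniteIndex] (f : G → M)
    (hf : ∀ g, ∀ h ∈ H, f (g * h) ∈ Submodule.span R {f g}) :
    Module.finrank R (Submodule.span R (Set.range f)) ≤ H.index := by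
  have : Fintype (G ⧸ H) := H.fintypeQuotientOfFiniteIndex
  have hspan : Submodule.span R (Set.range f) =
      Submodule.span R (Set.range fun q : G ⧸ H => f q.out) := by
    refine le_antisymm (Submodule.span_le.2 ?_) (Submodule.span_mono ?_)
    · rintro _ ⟨g, rfl⟩
      obtain ⟨h, hh⟩ := QuotientGroup.mk_out_eq_mul H g
      have hg : f g ∈ Submodule.span R {f (g : G ⧸ H).out} := by
        simpa [hh] using hf (g : G ⧸ H).out _ (inv_mem h.2)
      refine Submodule.span_mono (Set.singleton_subset_iff.2 ?_) hg
      exact Set.mem_range_self (f := fun q : G ⧸ H => f q.out) g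
    · rintro _ ⟨q, rfl⟩
      exact ⟨_, rfl⟩
  rw [hspan, Subgroup.index, Nat.card_eq_fintype_card]
  exact finrank_range_le_card _

end SpanOverCosets

section Eigenvalues

variable {k V : Type*} [Field k] [AddCommGroup V] [Module k V] [FiniteDimensional k V]
  (f : Module.End k V)

theorem card_eigenvalues_eq_card_roots_toFinset [DecidableEq k] :
    Nat.card f.Eigenvalues = f.charpoly.roots.toFinset.card := by
  rw [← Nat.card_eq_finsetCard]
  refine Nat.card_congr (Equiv.subtypeEquivRight fun μ => ?_)
  rw [Multiset.mem_toFinset, Polynomial.mem_roots f.charpoly_monic.ne_zero]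
  exact Module.End.hasEigenvalue_iff_isRoot_charpoly f μ

theorem card_roots_charpoly_le_finrank : f.charpoly.roots.card ≤ Module.finrank k V :=
  f.charpoly.card_roots'.trans_eq f.charpoly_natDegree

theorem card_eigenvalues_le_finrank : Nat.card f.Eigenvalues ≤ Module.finrank k V := by
  classical
  rw [card_eigenvalues_eq_card_roots_toFinset]
  exact (Multiset.toFinset_card_le _).trans (card_roots_charpoly_le_finrank f)

variable {f}

theorem eigenspace_eq_span_singleton_of_finrank_le_card_eigenvalues
    (hf : Module.finrank k V ≤ Nat.card f.Eigenvalues) {μ : k} {v : V}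
    (hv : f.HasEigenvector μ v) : f.eigenspace μ = Submodule.span k {v} := by
  classical
  rw [card_eigenvalues_eq_card_roots_toFinset] at hf
  have hnodup : f.charpoly.roots.Nodup := Multiset.toFinset_card_eq_card_iff_nodup.1 <|
    (Multiset.toFinset_card_le _).antisymm ((card_roots_charpoly_le_finrank f).trans hf)
  have hle : Module.finrank k (f.eigenspace μ) ≤ 1 :=
    calc Module.finrank k (f.eigenspace μ)
      _ ≤ f.charpoly.rootMultiplicity μ := LinearMap.finrank_eigenspace_le f μ
      _ = f.charpoly.roots.count μ := (Polynomial.count_roots _).symm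
      _ ≤ 1 := Multiset.nodup_iff_count_le_one.1 hnodup μ
  refine (Submodule.eq_of_le_of_finrank_le ?_ ?_).symm
  · simpa using hv.1
  · rwa [finrank_span_singleton hv.2]

end Eigenvalues

section Irreducible

variable {k G V : Type*} [Field k] [Group G] [AddCommGroup V] [Module k V]
  (ρ : Representation k G V)

theorem nontrivial_of_isIrreducible [ρ.IsIrreducible] : Nontrivial V :=
  IsSimpleModule.nontrivial (MonoidAlgebra k G) ρ.asModule

theorem span_orbit_eq_top [ρ.IsIrreducible] {v : V} (hv : v ≠ 0) :
    Submodule.span k (Set.range fun g => ρ g v) = ⊤ := by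
  let W : Subrepresentation ρ :=
    { toSubmodule := Submodule.span k (Set.range fun g => ρ g v)
      apply_mem_toSubmodule := fun g => by
        change _ ≤ (Submodule.span k _).comap (ρ g)
        rw [Submodule.span_le]
        rintro _ ⟨h, rfl⟩
        exact Submodule.subset_span ⟨g * h, by simp⟩ }
  have hvW : v ∈ W := Submodule.subset_span ⟨1, by simp⟩
  have hW : W = ⊤ := (IsSimpleOrder.eq_bot_or_eq_top W).resolve_left fun h =>
    hv ((Submodule.mem_bot k).1 (h ▸ hvW : v ∈ (⊥ : Subrepresentation ρ)))
  exact congrArg Subrepresentation.toSubmodule hW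

variable {ρ} in
theorem isMulCommutative_of_forall_mem_span_singleton [ρ.IsIrreducible]
    (hρ : Function.Injective ρ) (N : Subgroup G) [N.Normal] {v : V} (hv0 : v ≠ 0)
    (hv : ∀ g ∈ N, ρ g v ∈ Submodule.span k {v}) : IsMulCommutative N := by
  have hcomm : ∀ g ∈ N, ∀ h ∈ N, ρ g (ρ h v) = ρ h (ρ g v) := fun g hg h hh => by
    obtain ⟨a, ha⟩ := Submodule.mem_span_singleton.1 (hv g hg)
    obtain ⟨b, hb⟩ := Submodule.mem_span_singleton.1 (hv h hh)
    rw [← ha, ← hb, map_smul, map_smul, ← ha, ← hb, smul_comm]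
  refine isMulCommutative_iff.2 fun g h => Subtype.ext (hρ ?_)
  refine LinearMap.ext_on_range (span_orbit_eq_top ρ hv0) fun x => ?_
  have hconj : ∀ a b : G, ρ (a * b) (ρ x v) = ρ x (ρ (x⁻¹ * a * x) (ρ (x⁻¹ * b * x) v)) :=
    fun a b => by simp only [← Module.End.mul_apply, ← map_mul]; group
  have hmem : ∀ a ∈ N, x⁻¹ * a * x ∈ N := fun a ha => by
    simpa using ‹N.Normal›.conj_mem a ha x⁻¹
  rw [Subgroup.coe_mul, Subgroup.coe_mul, hconj, hconj, hcomm _ (hmem _ g.2) _ (hmem _ h.2)]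

variable {ρ} in
theorem isMulCommutative_of_finrank_eq_one (hρ : Function.Injective ρ)
    (hV : Module.finrank k V = 1) : IsMulCommutative G := by
  have hscalar := LinearMap.existsUnique_eq_smul_id_of_finrank_eq_one hV
  refine isMulCommutative_iff.2 fun g h => hρ ?_
  obtain ⟨a, ha, -⟩ := hscalar (ρ g)
  rw [map_mul, map_mul, ha]
  ext v
  simp

variable [IsAlgClosed k] [FiniteDimensional k V]

theorem exists_eq_smul_one_of_mem_center [ρ.IsIrreducible] {z : G} (hz : z ∈ Subgroup.center G) :
    ∃ c : k, ρ z = c • 1 := by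
  let f : Representation.IntertwiningMap ρ ρ := ⟨ρ z, fun g => by
    change ρ z * ρ g = ρ g * ρ z
    rw [← map_mul, ← map_mul, Subgroup.mem_center_iff.1 hz g]⟩
  obtain ⟨c, hc⟩ :=
    (Representation.IsIrreducible.algebraMap_intertwiningMap_bijective_of_isAlgClosed (ρ := ρ)).2 f
  exact ⟨c, congrArg Representation.IntertwiningMap.toLinearMap hc.symm⟩

theorem asAlgebraHom_surjective [ρ.IsIrreducible] : Function.Surjective ρ.asAlgebraHom := by
  -- By Schur's lemma `f` is linear over the endomorphisms of `ρ`, so Jacobson density applies.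
  intro f
  have : Module.Finite k ρ.asModule := ‹FiniteDimensional k V›
  have : Module.Finite (Module.End (MonoidAlgebra k G) ρ.asModule) ρ.asModule :=
    .of_restrictScalars_finite k _ _
  let F : Module.End (Module.End (MonoidAlgebra k G) ρ.asModule) ρ.asModule :=
    { toFun := f
      map_add' := f.map_add
      map_smul' := fun e v => by
        obtain ⟨c, rfl⟩ := (IsSimpleModule.algebraMap_end_bijective_of_isAlgClosed k).2 e
        exact f.map_smul c v }
  obtain ⟨r, hr⟩ := Module.Finite.toModuleEnd_moduleEnd_surjective F
  exact ⟨r, LinearMap.ext fun v => congrArg (· v) hr⟩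

theorem span_range_eq_top [ρ.IsIrreducible] : Submodule.span k (Set.range ρ) = ⊤ := by
  rw [eq_top_iff]
  intro f _
  obtain ⟨r, rfl⟩ := asAlgebraHom_surjective ρ f
  rw [Representation.asAlgebraHom_def, MonoidAlgebra.lift_apply]
  exact Submodule.sum_mem _ fun g _ => Submodule.smul_mem _ _ (Submodule.subset_span ⟨g, rfl⟩)

theorem sq_finrank_le_index_center [ρ.IsIrreducible] [(Subgroup.center G).FiniteIndex] :
    Module.finrank k V ^ 2 ≤ (Subgroup.center G).index := by
  have h := finrank_span_range_le_index (R := k) (Subgroup.center G) ρ fun g z hz => by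
    obtain ⟨c, hc⟩ := exists_eq_smul_one_of_mem_center ρ hz
    exact Submodule.mem_span_singleton.2 ⟨c, by rw [map_mul, hc, mul_smul_comm, mul_one]⟩
  rwa [span_range_eq_top, finrank_top, Module.finrank_linearMap, ← sq] at h

open scoped IsMulCommutative in
theorem exists_common_eigenvector [Nontrivial V] [IsMulCommutative G] :
    ∃ v : V, v ≠ 0 ∧ ∀ g, ρ g v ∈ Submodule.span k {v} := by
  have : Module.Finite k ρ.asModule := ‹FiniteDimensional k V›
  have : Nontrivial ρ.asModule := ‹Nontrivial V›
  have : IsArtinian (MonoidAlgebra k G) ρ.asModule := isArtinian_of_tower k inferInstance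
  obtain ⟨W, hW⟩ := IsAtomic.exists_atom (Submodule (MonoidAlgebra k G) ρ.asModule)
  have : IsSimpleModule (MonoidAlgebra k G) W := isSimpleModule_iff_isAtom.2 hW
  have : FiniteDimensional k W :=
    FiniteDimensional.finiteDimensional_submodule (W.restrictScalars k)
  have hdim := IsSimpleModule.finrank_eq_one_of_isMulCommutative (MonoidAlgebra k G) W k
  obtain ⟨w, hw0, hw⟩ := finrank_eq_one_iff'.1 hdim
  refine ⟨w.1, fun h => hw0 (Subtype.ext h), fun g => ?_⟩
  obtain ⟨c, hc⟩ := hw (MonoidAlgebra.single g (1 : k) • w)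
  refine Submodule.mem_span_singleton.2 ⟨c, ?_⟩
  have := congrArg Subtype.val hc
  simpa [Representation.single_smul] using! this

theorem finrank_le_index_of_isMulCommutative [ρ.IsIrreducible] (H : Subgroup G)
    [IsMulCommutative H] [H.FiniteIndex] : Module.finrank k V ≤ H.index := by
  have := nontrivial_of_isIrreducible ρ
  obtain ⟨v, hv0, hv⟩ := exists_common_eigenvector (ρ.comp H.subtype)
  have h := finrank_span_range_le_index (R := k) H (fun g => ρ g v) fun g a ha => by
    obtain ⟨c, hc⟩ := Submodule.mem_span_singleton.1 (hv ⟨a, ha⟩)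
    refine Submodule.mem_span_singleton.2 ⟨c, ?_⟩
    rw [map_mul, Module.End.mul_apply, ← map_smul, hc]
    rfl
  rwa [span_orbit_eq_top ρ hv0, finrank_top] at h

variable {ρ} in
theorem index_centralizer_le_card_eigenvalues [Nontrivial V] (hρ : Function.Injective ρ) {x : G}
    (hx : ∀ g, ∃ c : k, ρ (g * x * g⁻¹) = c • ρ x) :
    (Subgroup.centralizer {x}).index ≤ Nat.card (Module.End.Eigenvalues (ρ x)) := by
  choose c hc using hx
  obtain ⟨μ, hμ⟩ := Module.End.exists_eigenvalue (ρ x)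
  obtain ⟨v, hv⟩ := hμ.exists_hasEigenvector
  have hμ0 : μ ≠ 0 := by
    rintro rfl
    have h : ρ x⁻¹ (ρ x v) = v := by simp
    rw [hv.apply_eq_smul, zero_smul, map_zero] at h
    exact hv.2 h.symm
  have heig : ∀ g, Module.End.HasEigenvalue (ρ x) (c g * μ) := fun g => by
    refine Module.End.hasEigenvalue_of_hasEigenvector (x := ρ g⁻¹ v)
      ⟨Module.End.mem_eigenspace_iff.2 ?_, fun h => hv.2 ?_⟩
    · calc ρ x (ρ g⁻¹ v) = ρ g⁻¹ (ρ (g * x * g⁻¹) v) := by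
            simp only [← Module.End.mul_apply, ← map_mul]; group
        _ = (c g * μ) • ρ g⁻¹ v := by
            rw [hc, LinearMap.smul_apply, hv.apply_eq_smul, smul_smul, map_smul]
    · simpa using congrArg (ρ g) h
  refine Nat.card_le_card_of_injective
    (fun q : G ⧸ Subgroup.centralizer {x} =>
      (⟨c q.out * μ, heig _⟩ : Module.End.Eigenvalues (ρ x))) ?_
  intro q r hqr
  have hcqr : c q.out = c r.out := mul_right_cancel₀ hμ0 (congrArg Subtype.val hqr)
  have hconj : q.out * x * q.out⁻¹ = r.out * x * r.out⁻¹ := hρ (by rw [hc, hc, hcqr])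
  rw [← QuotientGroup.out_eq' q, ← QuotientGroup.out_eq' r, QuotientGroup.eq,
    Subgroup.mem_centralizer_singleton_iff]
  calc q.out⁻¹ * r.out * x = q.out⁻¹ * (r.out * x * r.out⁻¹) * r.out := by group
    _ = x * (q.out⁻¹ * r.out) := by rw [← hconj]; group

end Irreducible

section PGroup

variable {p : ℕ} [Fact p.Prime] {G : Type*} [Group G]

theorem le_index_of_ne_top (hG : IsPGroup p G) {H : Subgroup G} [H.FiniteIndex]
    (hH : H ≠ ⊤) : p ≤ H.index := by
  obtain ⟨m, hm⟩ := hG.index H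
  have hm0 : m ≠ 0 := fun h => hH (Subgroup.index_eq_one.1 (by rw [hm, h, pow_zero]))
  exact hm ▸ Nat.le_self_pow hm0 p

variable [Finite G]

theorem exists_notMem_center_forall_commutator_mem_center (hG : IsPGroup p G)
    (hZ : Subgroup.center G ≠ ⊤) :
    ∃ x ∉ Subgroup.center G, ∀ g : G, ⁅g, x⁆ ∈ Subgroup.center G := by
  have : Nontrivial (G ⧸ Subgroup.center G) := QuotientGroup.nontrivial_iff.2 hZ
  have := (hG.to_quotient (Subgroup.center G)).center_nontrivial
  obtain ⟨y, hy, hy1⟩ := (Subgroup.center (G ⧸ Subgroup.center G)).exists_ne_one_of_nontrivial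
  obtain ⟨x, rfl⟩ := QuotientGroup.mk_surjective y
  refine ⟨x, fun hx => hy1 ((QuotientGroup.eq_one_iff x).2 hx), fun g => ?_⟩
  rw [← QuotientGroup.eq_one_iff]
  exact commutatorElement_eq_one_iff_mul_comm.2 (Subgroup.mem_center_iff.1 hy g)

theorem normal_of_index_eq (hG : IsPGroup p G) {H : Subgroup G} (hH : H.index = p) :
    H.Normal := by
  have hp : p.Prime := Fact.out
  obtain ⟨n, hn⟩ := hG.exists_card_eq
  have hn0 : n ≠ 0 := by
    rintro rfl
    exact hp.not_dvd_one (by simpa [hH, hn] using H.index_dvd_card)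
  exact Subgroup.normal_of_index_eq_minFac_card (by rw [hH, hn, hp.pow_minFac hn0])

variable {k V W : Type*} [Field k] [IsAlgClosed k] [AddCommGroup V] [Module k V]
  [FiniteDimensional k V] [AddCommGroup W] [Module k W] [FiniteDimensional k W]

theorem exists_isMulCommutative_index_le (hG : IsPGroup p G) {ρ : Representation k G V}
    [ρ.IsIrreducible] (hρ : Function.Injective ρ) (hV : Module.finrank k V = p) :
    ∃ H : Subgroup G, IsMulCommutative H ∧ H.index ≤ p := by
  have := nontrivial_of_isIrreducible ρ
  by_cases hZ : Subgroup.center G = ⊤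
  · exact ⟨Subgroup.center G, inferInstance, by simp [hZ, (Fact.out : p.Prime).one_le]⟩
  obtain ⟨x, hxZ, hx⟩ := exists_notMem_center_forall_commutator_mem_center hG hZ
  have hconj : ∀ g, ∃ c : k, ρ (g * x * g⁻¹) = c • ρ x := fun g => by
    obtain ⟨c, hc⟩ := exists_eq_smul_one_of_mem_center ρ (hx g)
    refine ⟨c, ?_⟩
    rw [← one_mul (ρ x), ← smul_mul_assoc, ← hc, ← map_mul, commutatorElement_def,
      inv_mul_cancel_right]
  have hindex_le := index_centralizer_le_card_eigenvalues hρ hconj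
  have hle_index : p ≤ (Subgroup.centralizer {x}).index := le_index_of_ne_top hG <| by
    simpa [Subgroup.centralizer_eq_top_iff_subset] using hxZ
  have hindex : (Subgroup.centralizer {x}).index = p :=
    ((hindex_le.trans (card_eigenvalues_le_finrank _)).trans_eq hV).antisymm hle_index
  have := normal_of_index_eq hG hindex
  obtain ⟨μ, hμ⟩ := Module.End.exists_eigenvalue (ρ x)
  obtain ⟨v, hv⟩ := hμ.exists_hasEigenvector
  have hline := eigenspace_eq_span_singleton_of_finrank_le_card_eigenvalues
    ((hV.trans_le hle_index).trans hindex_le) hv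
  refine ⟨_, isMulCommutative_of_forall_mem_span_singleton hρ _ hv.2 fun g hg => ?_, hindex.le⟩
  have hcomm : Commute (ρ x) (ρ g) :=
    (Commute.symm (Subgroup.mem_centralizer_singleton_iff.1 hg)).map ρ
  exact hline ▸ Module.End.mapsTo_genEigenspace_of_comm hcomm μ 1 hv.1

theorem finrank_le_finrank_of_injective (hG : IsPGroup p G) {ρ : Representation k G V}
    [ρ.IsIrreducible] (hρ : Function.Injective ρ)
    (hV : Module.finrank k V = 1 ∨ Module.finrank k V = p)
    (σ : Representation k G W) [σ.IsIrreducible] :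
    Module.finrank k W ≤ Module.finrank k V := by
  obtain hV | hV := hV
  · have := isMulCommutative_of_finrank_eq_one hρ hV
    rw [hV, Representation.IsIrreducible.finrank_eq_one_of_isMulCommutative σ]
  · obtain ⟨H, hH, hindex⟩ := exists_isMulCommutative_index_le hG hρ hV
    exact (finrank_le_index_of_isMulCommutative σ H).trans (hindex.trans_eq hV.symm)

theorem two_mul_add_one_le_of_finrank_eq_pow {n b : ℕ} (hG : Nat.card G = p ^ n)
    (ρ : Representation k G V) [ρ.IsIrreducible] (hb : b ≠ 0) (hV : Module.finrank k V = p ^ b) :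
    2 * b + 1 ≤ n := by
  have hp : p.Prime := Fact.out
  have hsq := sq_finrank_le_index_center ρ
  have hn : n ≠ 0 := by
    rintro rfl
    have h := hsq.trans (Nat.le_of_dvd Nat.card_pos (Subgroup.center G).index_dvd_card)
    rw [hG, hV, pow_zero, ← pow_mul] at h
    exact h.not_gt (Nat.one_lt_pow (by positivity) hp.one_lt)
  have hZ : p ≤ Nat.card (Subgroup.center G) := by
    obtain ⟨m, hm, hcard⟩ := IsPGroup.card_center_eq_prime_pow hG (Nat.pos_of_ne_zero hn)
    exact hcard ▸ Nat.le_self_pow hm.ne' p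
  rw [← Nat.pow_le_pow_iff_right hp.one_lt, ← hG, ← (Subgroup.center G).card_mul_index]
  calc p ^ (2 * b + 1) = p * (p ^ b) ^ 2 := by ring
    _ ≤ _ := Nat.mul_le_mul hZ (hV ▸ hsq)

end PGroup

section FDRep

universe u v

variable {k : Type u} {G : Type v} [Field k] [Group G]

theorem isIrreducible_of_simple (V : FDRep k G) [Simple V] :
    Representation.IsIrreducible (k := k) (V := V) V.ρ := by
  have hV : Nontrivial V := by
    by_contra h
    rw [not_nontrivial_iff_subsingleton] at h
    refine id_nonzero V (Action.hom_ext _ _ ?_)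
    ext v
    exact Subsingleton.elim _ _
  let ρ : Representation k G V := V.ρ
  have hbot_or_top (S : Subrepresentation ρ) : S = ⊥ ∨ S = ⊤ := by
    let f : FDRep.of S.toRepresentation ⟶ V :=
      ⟨InducedCategory.homMk (ModuleCat.ofHom S.toSubmodule.subtype), fun g => by ext1; rfl⟩
    have : Mono f := by
      refine (forget₂ (FDRep k G) (FGModuleCat k) ⋙ forget (FGModuleCat k)).mono_of_mono_map ?_
      exact (mono_iff_injective _).2 fun _ _ h => Subtype.ext h
    by_cases hf : f = 0
    · refine .inl (Subrepresentation.toSubmodule_injective ?_)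
      exact (Submodule.eq_bot_iff _).2 fun v hv => congrArg (·.hom.hom.hom ⟨v, hv⟩) hf
    · have : IsIso f := isIso_of_mono_of_nonzero hf
      refine .inr (Subrepresentation.toSubmodule_injective ?_)
      refine Submodule.eq_top_iff'.2 fun v => ?_
      rw [← (FDRep.isoToLinearEquiv (asIso f)).apply_symm_apply v]
      exact Subtype.prop _
  have hbot_ne_top : (⊥ : Subrepresentation ρ) ≠ ⊤ := fun h =>
    bot_ne_top (congrArg Subrepresentation.toSubmodule h)
  exact { exists_pair_ne := ⟨⊥, ⊤, hbot_ne_top⟩, eq_bot_or_eq_top := hbot_or_top }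

theorem injective_of_repKer_eq_bot {G : Type} [Group G] {V : FDRep ℂ G} (hV : repKer V = ⊥) :
    Function.Injective V.ρ := fun g h hgh =>
  (MonoidHom.ker_eq_bot_iff _).1 hV <| Units.ext <| by
    simpa only [Representation.asGroupHom_apply] using hgh

end FDRep

theorem maximal_class_three_degrees_faithful_general (p n b : ℕ) (hp : p.Prime) (G : Type) [Group G]
    [Finite G] (hcard : Nat.card G = p ^ n) (hb : b ≠ 0) (hmem : p ^ b ∈ cdSet G)
    (hcd : cdSet G ⊆ {1, p, p ^ b}) :
    2 * b + 1 ≤ n ∧ ∀ V : FDRep ℂ G, Simple V → repKer V = ⊥ →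
      repDegree V = p ^ b ∧ codegree V = p ^ (n - b) := by
  have : Fact p.Prime := ⟨hp⟩
  obtain ⟨U, hU, hUdeg⟩ := hmem
  have := isIrreducible_of_simple U
  have hn : 2 * b + 1 ≤ n := two_mul_add_one_le_of_finrank_eq_pow hcard U.ρ hb hUdeg
  refine ⟨hn, fun V hV hker => ?_⟩
  have := isIrreducible_of_simple V
  have hle (h : repDegree V = 1 ∨ repDegree V = p) : p ^ b ≤ repDegree V :=
    hUdeg.ge.trans <| finrank_le_finrank_of_injective (.of_card hcard)
      (injective_of_repKer_eq_bot hker) h U.ρ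
  have hdeg : repDegree V = p ^ b := by
    obtain h | h | h := hcd ⟨V, hV, rfl⟩
    · exact (h.trans_le (Nat.one_le_pow b p hp.pos)).antisymm (hle (.inl h))
    · exact (h.trans_le (Nat.le_self_pow hb p)).antisymm (hle (.inr h))
    · exact h
  refine ⟨hdeg, ?_⟩
  rw [codegree, hker, Subgroup.index_bot, hcard, hdeg, Nat.pow_div (by omega) hp.pos]

/-- A maximal class `p`-group of order `p^n` with `cd(G) = {1, p, p^b}`, `b ≥ 2`, satisfies
`n ≥ 2b + 1`, and every faithful irreducible character has degree `p^b` and codegree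
`p^{n-b}`. -/
theorem maximal_class_three_degrees_faithful (p n b : ℕ) (hp : p.Prime) (G : Type) [Group G]
    [Fintype G] (hcard : Fintype.card G = p ^ n) (hb : 2 ≤ b) (hmax : nilClass G = n - 1)
    (hcd : cdSet G = {1, p, p ^ b}) :
    2 * b + 1 ≤ n ∧ ∀ V : FDRep ℂ G, Simple V → repKer V = ⊥ →
      repDegree V = p ^ b ∧ codegree V = p ^ (n - b) := by
  exact maximal_class_three_degrees_faithful_general p n b hp G
    (Nat.card_eq_fintype_card.trans hcard) (by omega) (by simp [hcd]) hcd.le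
end
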